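/- Let x be a complex number and let a, d be complex numbers such that 2a+1 and d are not nonpositive integers or zero, and a+1/2 and a+3/2 are not nonpositive integers or zero. Then e^{−x} · Σ_{k=0}^∞ (a)_k (d+1)_k (2x)^k / ((2a+1)_k (d)_k k!) = Σ_{k=0}^∞ (x²/4)^k / ((a+1/2)_k k!) − ((1 − 2a/d) x /(2a+1)) · Σ_{k=0}^∞ (x²/4)^k / ((a+3/2)_k k!). -/

import Mathlib

/-- The Pochhammer symbol `(a)_k = a (a+1) ⋯ (a+k-1)`. -/
noncomputable def poch (a : ℂ) (k : ℕ) : ℂ := Polynomial.eval a (ascPochhammer ℂ k)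

/-!
Write `B b` for the series `₀F₁(; b; X² / 4)`. With `b = a + 1/2`, the contiguous relations for
`₀F₁` show that `N = exp X * (B b - X / (2 * b) * B (b + 1))` has a derivative proportional to
`exp X * B (b + 1)`, and hence that `N` solves Kummer's equation, rescaled by `2`, with parameters
`a` and `2 * a + 1`. A power series solution is determined by its constant term, so
`N = ₁F₁(a; 2 * a + 1; 2 * X)`. Since `(d + 1)_k / (d)_k = 1 + k / d`, the operator
`1 + (1 / d) * X * d/dX` turns this `₁F₁` into the `₂F₂` of the theorem, while its effect on `N` is
known from the formula for its derivative.
-/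

open PowerSeries
open scoped Nat

section Pochhammer

theorem ascPochhammer_succ_eval_left {S : Type*} [CommSemiring S] (n : ℕ) (k : S) :
    (ascPochhammer S (n + 1)).eval k = k * (ascPochhammer S n).eval (k + 1) := by
  simp [ascPochhammer_succ_left, Polynomial.eval_comp]

theorem prod_map_ascPochhammer_succ_eval {S : Type*} [CommSemiring S] (s : Multiset S) (n : ℕ) :
    (s.map (ascPochhammer S (n + 1)).eval).prod =
      s.prod * ((s.map (· + 1)).map (ascPochhammer S n).eval).prod := by
  simp only [ascPochhammer_succ_eval_left, Multiset.prod_map_mul, Multiset.map_id',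
    Multiset.map_map, Function.comp_def]

theorem ascPochhammer_eval_ne_zero {R : Type*} [CommRing R] [IsDomain R] {b : R}
    (hb : ∀ k : ℕ, b ≠ -k) (n : ℕ) : (ascPochhammer R n).eval b ≠ 0 := by
  simp only [ne_eq, ascPochhammer_eval_eq_zero_iff, not_exists, not_and]
  exact fun k _ hk ↦ hb k (by rw [hk, neg_neg])

theorem add_one_ne_neg_natCast {R : Type*} [Ring R] {b : R} (hb : ∀ k : ℕ, b ≠ -k) (k : ℕ) :
    b + 1 ≠ -k := fun h ↦
  hb (k + 1) (by rw [Nat.cast_add_one, neg_add, ← h, ← sub_eq_add_neg, add_sub_cancel_right])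

theorem ne_neg_natCast_of_two_mul {R : Type*} [Ring R] {b : R} (hb : ∀ k : ℕ, 2 * b ≠ -k) (k : ℕ) :
    b ≠ -k := fun h ↦
  hb (2 * k) (by rw [h, Nat.cast_mul, Nat.cast_ofNat, mul_neg])

end Pochhammer

section FormalCalculus

variable {R : Type*} [CommRing R]

theorem coeff_X_mul_derivative (f : R⟦X⟧) (n : ℕ) :
    coeff n (X * d⁄dX R f) = n * coeff n f := by
  cases n with
  | zero => simp
  | succ n => rw [coeff_succ_X_mul, coeff_derivative, Nat.cast_add_one, mul_comm]

theorem rescale_C (c r : R) : rescale c (C r) = C r := by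
  ext n
  cases n <;> simp [coeff_C]

theorem derivative_rescale (c : R) (f : R⟦X⟧) :
    d⁄dX R (rescale c f) = C c * rescale c (d⁄dX R f) := by
  ext n
  simp only [coeff_derivative, coeff_rescale, coeff_C_mul]
  ring

theorem X_mul_derivative_rescale (c : R) (f : R⟦X⟧) :
    X * d⁄dX R (rescale c f) = rescale c (X * d⁄dX R f) := by
  rw [derivative_rescale, map_mul, rescale_X, mul_left_comm, mul_assoc]

theorem derivative_expand {p : ℕ} (hp : p ≠ 0) (f : R⟦X⟧) :
    d⁄dX R (expand p hp f) = (p : R⟦X⟧) * X ^ (p - 1) * expand p hp (d⁄dX R f) := by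
  rw [expand_apply, derivative_subst (.X_pow hp), derivative_pow, derivative_X, mul_one,
    expand_apply, mul_comm]

end FormalCalculus

section HypergeometricSeries

variable {K : Type*} [Field K]

/-- The generalized hypergeometric series `pFq(a; b; X)` as a formal power series, with multisets of
upper parameters `a` and lower parameters `b` as in `Complex.regularizedHGFunCoeff`. A coefficient
is `0` when one of the Pochhammer symbols in its denominator vanishes. -/
noncomputable def hypergeometricSeries (a b : Multiset K) : K⟦X⟧ :=
  .mk fun n ↦ (a.map (ascPochhammer K n).eval).prod / (n ! * (b.map (ascPochhammer K n).eval).prod)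

theorem coeff_hypergeometricSeries (a b : Multiset K) (n : ℕ) :
    coeff n (hypergeometricSeries a b) =
      (a.map (ascPochhammer K n).eval).prod / (n ! * (b.map (ascPochhammer K n).eval).prod) :=
  coeff_mk n _

theorem constantCoeff_hypergeometricSeries (a b : Multiset K) :
    constantCoeff (hypergeometricSeries a b) = 1 := by
  simp [← coeff_zero_eq_constantCoeff_apply, coeff_hypergeometricSeries]

theorem hypergeometricSeries_cons_cons (a b : Multiset K) {d : K} (hd : ∀ k : ℕ, d ≠ -k) :
    hypergeometricSeries (d ::ₘ a) (d ::ₘ b) = hypergeometricSeries a b := by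
  ext n
  simp only [coeff_hypergeometricSeries, Multiset.map_cons, Multiset.prod_cons]
  rw [mul_left_comm, mul_div_mul_left _ _ (ascPochhammer_eval_ne_zero hd n)]

theorem X_mul_derivative_hypergeometricSeries_cons_left (d : K) (a b : Multiset K) :
    X * d⁄dX K (hypergeometricSeries (d ::ₘ a) b) =
      C d * (hypergeometricSeries ((d + 1) ::ₘ a) b - hypergeometricSeries (d ::ₘ a) b) := by
  ext n
  have shift := (ascPochhammer_succ_eval n d).symm.trans (ascPochhammer_succ_eval_left n d)
  simp only [coeff_X_mul_derivative, coeff_C_mul, map_sub, coeff_hypergeometricSeries,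
    Multiset.map_cons, Multiset.prod_cons, mul_div_assoc]
  linear_combination ((a.map (ascPochhammer K n).eval).prod /
    (n ! * (b.map (ascPochhammer K n).eval).prod)) * shift

theorem hypergeometricSeries_cons_add_one_cons {d : K} (hd : ∀ k : ℕ, d ≠ -k)
    (a b : Multiset K) :
    hypergeometricSeries ((d + 1) ::ₘ a) (d ::ₘ b) = hypergeometricSeries a b +
      C (1 / d) * (X * d⁄dX K (hypergeometricSeries a b)) := by
  have hd₀ : d ≠ 0 := by simpa using hd 0
  rw [← hypergeometricSeries_cons_cons a b hd, X_mul_derivative_hypergeometricSeries_cons_left,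
    ← mul_assoc, ← map_mul, one_div_mul_cancel hd₀, map_one, one_mul, add_sub_cancel]

theorem X_mul_derivative_hypergeometricSeries_cons_right {c : K} (hc : ∀ k : ℕ, c ≠ -k)
    (a b : Multiset K) :
    X * d⁄dX K (hypergeometricSeries a ((c + 1) ::ₘ b)) =
      C c * (hypergeometricSeries a (c ::ₘ b) - hypergeometricSeries a ((c + 1) ::ₘ b)) := by
  ext n
  have shift := (ascPochhammer_succ_eval n c).symm.trans (ascPochhammer_succ_eval_left n c)
  have hcn := ascPochhammer_eval_ne_zero hc n
  have hcn' := ascPochhammer_eval_ne_zero (add_one_ne_neg_natCast hc) n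
  have inv_shift : (n + c) * ((ascPochhammer K n).eval (c + 1))⁻¹ =
      c * ((ascPochhammer K n).eval c)⁻¹ := by
    field_simp
    linear_combination shift
  simp only [coeff_X_mul_derivative, coeff_C_mul, map_sub, coeff_hypergeometricSeries,
    Multiset.map_cons, Multiset.prod_cons, div_eq_mul_inv, mul_inv]
  linear_combination ((a.map (ascPochhammer K n).eval).prod *
    ((n ! : K)⁻¹ * (b.map (ascPochhammer K n).eval).prod⁻¹)) * inv_shift

variable [CharZero K]

theorem derivative_hypergeometricSeries (a b : Multiset K) :
    d⁄dX K (hypergeometricSeries a b) =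
      C (a.prod / b.prod) * hypergeometricSeries (a.map (· + 1)) (b.map (· + 1)) := by
  ext n
  have hn : (n + 1 : K) ≠ 0 := n.cast_add_one_ne_zero
  rw [coeff_derivative, coeff_C_mul, coeff_hypergeometricSeries, coeff_hypergeometricSeries,
    prod_map_ascPochhammer_succ_eval, prod_map_ascPochhammer_succ_eval, Nat.factorial_succ,
    Nat.cast_mul, Nat.cast_add_one, div_mul_div_comm, mul_assoc (n + 1 : K), div_mul_eq_mul_div,
    mul_comm _ (n + 1 : K), mul_div_mul_left _ _ hn, mul_left_comm b.prod]

theorem eq_rescale_hypergeometricSeries_of_kummer {a b c : K} (hb : ∀ k : ℕ, b ≠ -k) {f : K⟦X⟧}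
    (hf : X * d⁄dX K (d⁄dX K f) + (C b - C c * X) * d⁄dX K f = C (c * a) * f) :
    f = C (constantCoeff f) * rescale c (hypergeometricSeries {a} {b}) := by
  have recurrence (n : ℕ) :
      (n + 1) * (b + n) * coeff (n + 1) f = c * (a + n) * coeff n f := by
    have h := congrArg (coeff n) hf
    simp only [sub_mul, mul_assoc, map_add, map_sub, coeff_C_mul, coeff_X_mul_derivative,
      coeff_derivative] at h
    linear_combination h
  ext n
  simp only [coeff_C_mul, coeff_rescale, coeff_hypergeometricSeries, Multiset.map_singleton,
    Multiset.prod_singleton]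
  induction n with
  | zero => simp
  | succ n ih =>
    have hn : (n + 1 : K) ≠ 0 := n.cast_add_one_ne_zero
    have hbn : b + n ≠ 0 := fun h ↦ hb n (eq_neg_of_add_eq_zero_left h)
    have hpoch := ascPochhammer_eval_ne_zero hb n
    apply mul_left_cancel₀ (mul_ne_zero hn hbn)
    rw [recurrence, ih, ascPochhammer_succ_eval, ascPochhammer_succ_eval, Nat.factorial_succ]
    push_cast
    field_simp
    ring

end HypergeometricSeries

section BesselSeries

variable {K : Type*} [Field K]

/-- The series `₀F₁(; b; X² / 4)`, which is the modified Bessel function `I_(b-1)` normalized to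
have constant term `1`. -/
noncomputable def modifiedBesselSeries (b : K) : K⟦X⟧ :=
  expand 2 two_ne_zero (rescale (1 / 4) (hypergeometricSeries 0 {b}))

theorem constantCoeff_modifiedBesselSeries (b : K) :
    constantCoeff (modifiedBesselSeries b) = 1 := by
  rw [modifiedBesselSeries, constantCoeff_expand, ← coeff_zero_eq_constantCoeff_apply,
    coeff_rescale, pow_zero, one_mul, coeff_zero_eq_constantCoeff_apply,
    constantCoeff_hypergeometricSeries]

theorem X_mul_derivative_modifiedBesselSeries (b : K) :
    X * d⁄dX K (modifiedBesselSeries b) = C 2 * expand 2 two_ne_zero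
      (rescale (1 / 4) (X * d⁄dX K (hypergeometricSeries 0 {b}))) := by
  simp only [modifiedBesselSeries, derivative_expand, derivative_rescale, map_mul, rescale_X,
    expand_C, expand_X, map_ofNat]
  ring

theorem X_mul_derivative_modifiedBesselSeries_add_one {b : K} (hb : ∀ k : ℕ, b ≠ -k) :
    X * d⁄dX K (modifiedBesselSeries (b + 1)) =
      C (2 * b) * (modifiedBesselSeries b - modifiedBesselSeries (b + 1)) := by
  have contiguous := X_mul_derivative_hypergeometricSeries_cons_right hb 0 0
  simp only [Multiset.cons_zero] at contiguous
  rw [X_mul_derivative_modifiedBesselSeries, contiguous]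
  simp only [modifiedBesselSeries, map_mul, map_sub, rescale_C, expand_C]
  ring

theorem derivative_modifiedBesselSeries [CharZero K] (b : K) :
    d⁄dX K (modifiedBesselSeries b) = C (1 / (2 * b)) * (X * modifiedBesselSeries (b + 1)) := by
  simp only [modifiedBesselSeries, derivative_expand, derivative_rescale,
    derivative_hypergeometricSeries, map_mul, Multiset.map_zero, Multiset.map_singleton,
    Multiset.prod_zero, Multiset.prod_singleton, rescale_C, expand_C, Nat.cast_ofNat]
  have scalars : 2 * (C (1 / 4) * C (1 / b)) = (C (1 / (2 * b)) : K⟦X⟧) := by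
    rw [← map_ofNat C 2, ← map_mul, ← map_mul]
    congr 1
    field_simp
    norm_num
  linear_combination X * expand 2 two_ne_zero
    (rescale (1 / 4) (hypergeometricSeries 0 {b + 1})) * scalars

end BesselSeries

section Kummer

variable {K : Type*} [Field K] [CharZero K]

theorem derivative_exp_mul_modifiedBesselSeries_sub {b : K} (hb : ∀ k : ℕ, 2 * b ≠ -k) :
    d⁄dX K (exp K * (modifiedBesselSeries b -
        C (1 / (2 * b)) * (X * modifiedBesselSeries (b + 1)))) =
      C ((2 * b - 1) / (2 * b)) * (exp K * modifiedBesselSeries (b + 1)) := by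
  have hb₀ : 2 * b ≠ 0 := by simpa using hb 0
  have inv_mul : C (1 / (2 * b)) * C (2 * b) = (1 : K⟦X⟧) := by
    rw [← map_mul, one_div_mul_cancel hb₀, map_one]
  have dB := derivative_modifiedBesselSeries b
  have dB_add_one :=
    X_mul_derivative_modifiedBesselSeries_add_one (ne_neg_natCast_of_two_mul hb)
  rw [sub_div, div_self hb₀, map_sub, map_one]
  simp only [Derivation.leibniz, map_sub, smul_eq_mul, derivative_exp, derivative_X, derivative_C]
  linear_combination exp K * dB - exp K * C (1 / (2 * b)) * dB_add_one -
    exp K * (modifiedBesselSeries b - modifiedBesselSeries (b + 1)) * inv_mul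

theorem exp_mul_modifiedBesselSeries_sub {b : K} (hb : ∀ k : ℕ, 2 * b ≠ -k) :
    exp K * (modifiedBesselSeries b - C (1 / (2 * b)) * (X * modifiedBesselSeries (b + 1))) =
      rescale 2 (hypergeometricSeries {b - 1 / 2} {2 * b}) := by
  have hb₀ : 2 * b ≠ 0 := by simpa using hb 0
  have dB_add_one :=
    X_mul_derivative_modifiedBesselSeries_add_one (ne_neg_natCast_of_two_mul hb)
  have mul_two_mul : C ((2 * b - 1) / (2 * b)) * C (2 * b) = (C (2 * (b - 1 / 2)) : K⟦X⟧) := by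
    rw [← map_mul, div_mul_cancel₀ _ hb₀, mul_sub, mul_one_div_cancel two_ne_zero]
  have mul_inv : C ((2 * b - 1) / (2 * b)) = (C (2 * (b - 1 / 2)) * C (1 / (2 * b)) : K⟦X⟧) := by
    rw [← map_mul, mul_one_div, mul_sub, mul_one_div_cancel two_ne_zero]
  refine (eq_rescale_hypergeometricSeries_of_kummer (a := b - 1 / 2) (c := 2) hb ?_).trans ?_
  · rw [derivative_exp_mul_modifiedBesselSeries_sub hb]
    simp only [Derivation.leibniz, smul_eq_mul, derivative_exp, derivative_C, map_ofNat C 2]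
    linear_combination C ((2 * b - 1) / (2 * b)) * exp K * dB_add_one +
      exp K * modifiedBesselSeries b * mul_two_mul -
      exp K * X * modifiedBesselSeries (b + 1) * mul_inv
  · simp [constantCoeff_modifiedBesselSeries]

theorem rescale_hypergeometricSeries_eq_exp_mul {a d : K} (ha : ∀ k : ℕ, 2 * a + 1 ≠ -k)
    (hd : ∀ k : ℕ, d ≠ -k) :
    rescale 2 (hypergeometricSeries {d + 1, a} {d, 2 * a + 1}) =
      exp K * (modifiedBesselSeries (a + 1 / 2) -
        C ((1 - 2 * a / d) / (2 * a + 1)) * (X * modifiedBesselSeries (a + 3 / 2))) := by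
  have two_mul_half : 2 * (a + 1 / 2) = 2 * a + 1 := by ring
  have hb : ∀ k : ℕ, 2 * (a + 1 / 2) ≠ -k := by rwa [two_mul_half]
  have kummer := exp_mul_modifiedBesselSeries_sub hb
  have dkummer := derivative_exp_mul_modifiedBesselSeries_sub hb
  rw [kummer] at dkummer
  rw [two_mul_half, add_sub_cancel_right, show a + 1 / 2 + 1 = a + 3 / 2 by ring] at kummer dkummer
  have scalars : C ((1 - 2 * a / d) / (2 * a + 1)) =
      (C (1 / (2 * a + 1)) - C (1 / d) * C ((2 * a + 1 - 1) / (2 * a + 1)) : K⟦X⟧) := by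
    rw [← map_mul, ← map_sub]
    congr 1
    ring
  rw [Multiset.insert_eq_cons, Multiset.insert_eq_cons, hypergeometricSeries_cons_add_one_cons hd,
    map_add, map_mul, rescale_C, ← X_mul_derivative_rescale, dkummer, ← kummer, scalars]
  ring

end Kummer

section Evaluation

/-- The formal power series `f`, evaluated at `x`, converges (unconditionally) to `s`. -/
def HasSumAt {R : Type*} [CommSemiring R] [TopologicalSpace R] (f : R⟦X⟧) (x s : R) : Prop :=
  HasSum (fun n ↦ coeff n f * x ^ n) s

section Semiring

variable {R : Type*} [CommSemiring R] [TopologicalSpace R]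

theorem hasSumAt_C (c x : R) : HasSumAt (C c) x c := by
  have h := hasSum_single (f := fun n ↦ coeff n (C c) * x ^ n) 0
    fun n hn ↦ by rw [coeff_C, if_neg hn, zero_mul]
  simpa [HasSumAt] using h

theorem hasSumAt_X (x : R) : HasSumAt X x x := by
  have h := hasSum_single (f := fun n ↦ coeff n X * x ^ n) 1
    fun n hn ↦ by rw [coeff_X, if_neg hn, zero_mul]
  simpa [HasSumAt] using h

theorem HasSumAt.rescale {f : R⟦X⟧} {c x s : R} (hf : HasSumAt f (c * x) s) :
    HasSumAt (rescale c f) x s := by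
  refine HasSum.congr_fun hf fun n ↦ ?_
  rw [coeff_rescale, mul_pow, mul_left_comm, mul_assoc]

end Semiring

theorem HasSumAt.expand {R : Type*} [CommRing R] [TopologicalSpace R] {p : ℕ} (hp : p ≠ 0)
    {f : R⟦X⟧} {x s : R} (hf : HasSumAt f (x ^ p) s) : HasSumAt (expand p hp f) x s := by
  refine ((mul_right_injective₀ hp).hasSum_iff fun n hn ↦ ?_).1 ?_
  · rw [coeff_expand_of_not_dvd p hp f fun ⟨k, hk⟩ ↦ hn ⟨k, hk.symm⟩, zero_mul]
  · refine HasSum.congr_fun hf fun n ↦ ?_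
    simp only [Function.comp_apply, coeff_expand_mul, pow_mul]

theorem HasSumAt.sub {R : Type*} [CommRing R] [TopologicalSpace R] [IsTopologicalAddGroup R]
    {f g : R⟦X⟧} {x s t : R} (hf : HasSumAt f x s) (hg : HasSumAt g x t) :
    HasSumAt (f - g) x (s - t) := by
  refine (HasSum.sub hf hg).congr_fun fun n ↦ ?_
  rw [map_sub, sub_mul]

theorem HasSumAt.mul {𝕜 : Type*} [RCLike 𝕜] {f g : 𝕜⟦X⟧} {x s t : 𝕜} (hf : HasSumAt f x s)
    (hg : HasSumAt g x t) : HasSumAt (f * g) x (s * t) := by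
  have cauchy_term (n : ℕ) : ∑ ij ∈ Finset.HasAntidiagonal.antidiagonal n,
      coeff ij.1 f * x ^ ij.1 * (coeff ij.2 g * x ^ ij.2) = coeff n (f * g) * x ^ n := by
    rw [coeff_mul, Finset.sum_mul]
    refine Finset.sum_congr rfl fun ij hij ↦ ?_
    rw [← Finset.HasAntidiagonal.mem_antidiagonal.1 hij, pow_add, mul_mul_mul_comm]
  have hf' := hf.summable.norm
  have hg' := hg.summable.norm
  have h := (summable_norm_sum_mul_antidiagonal_of_summable_norm hf' hg').of_norm.hasSum
  rw [← tsum_mul_tsum_eq_tsum_sum_antidiagonal_of_summable_norm hf' hg', hf.tsum_eq,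
    hg.tsum_eq] at h
  simpa only [HasSumAt, cauchy_term] using h

theorem hasSumAt_exp (x : ℂ) : HasSumAt (exp ℂ) x (Complex.exp x) := by
  rw [Complex.exp_eq_exp_ℂ]
  refine (NormedSpace.expSeries_div_hasSum_exp x).congr_fun fun n ↦ ?_
  rw [coeff_exp, map_div₀, map_one, map_natCast, one_div_mul_eq_div]

theorem coeff_hypergeometricSeries_eq_prod_Gamma_mul (a : Multiset ℂ) {b : Multiset ℂ}
    (hb : ∀ j ∈ b, ∀ k : ℕ, j ≠ -k) (n : ℕ) :
    coeff n (hypergeometricSeries a b) =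
      (b.map Complex.Gamma).prod * Complex.regularizedHGFunCoeff a b n := by
  have prod_Gamma_ne_zero : (b.map Complex.Gamma).prod ≠ 0 := by
    simpa [Multiset.prod_eq_zero_iff] using fun j hj ↦ Complex.Gamma_ne_zero (hb j hj)
  have prod_Gamma_add : (b.map (Complex.Gamma <| · + n)).prod =
      (b.map Complex.Gamma).prod * (b.map (ascPochhammer ℂ n).eval).prod := by
    rw [← Multiset.prod_map_mul]
    refine congrArg _ (Multiset.map_congr rfl fun j hj ↦ ?_)
    rw [← Complex.Gamma_add_nat_div_Gamma_eq j (hb j hj),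
      mul_div_cancel₀ _ (Complex.Gamma_ne_zero (hb j hj))]
  rw [coeff_hypergeometricSeries, Complex.regularizedHGFunCoeff, prod_Gamma_add,
    mul_left_comm (n ! : ℂ), mul_div_assoc', mul_div_mul_left _ _ prod_Gamma_ne_zero]

theorem hasSumAt_hypergeometricSeries {a b : Multiset ℂ} (hab : a.card ≤ b.card)
    (hb : ∀ j ∈ b, ∀ k : ℕ, j ≠ -k) (x : ℂ) :
    HasSumAt (hypergeometricSeries a b) x (∑' n, coeff n (hypergeometricSeries a b) * x ^ n) := by
  have regularized : Summable fun n ↦ Complex.regularizedHGFunCoeff a b n * x ^ n := by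
    have h := (Complex.regularizedHGFunSeries a b).summable (x := x)
      (by simp [Complex.radius_regularizedHGFunSeries_eq_top hab])
    simpa [mul_comm] using h
  refine Summable.hasSum ?_
  simpa only [coeff_hypergeometricSeries_eq_prod_Gamma_mul a hb, mul_assoc] using
    regularized.mul_left (b.map Complex.Gamma).prod

theorem hasSumAt_modifiedBesselSeries {b : ℂ} (hb : ∀ k : ℕ, b ≠ -k) (x : ℂ) :
    HasSumAt (modifiedBesselSeries b) x (∑' k : ℕ, (x ^ 2 / 4) ^ k / (poch b k * (k ! : ℂ))) := by
  have h := hasSumAt_hypergeometricSeries (a := 0) (b := {b}) (by simp) (by simpa using hb)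
    (1 / 4 * x ^ 2)
  convert! h.rescale.expand two_ne_zero using 3 with k
  simp only [coeff_hypergeometricSeries, poch, Multiset.map_zero, Multiset.prod_zero,
    Multiset.map_singleton, Multiset.prod_singleton]
  ring

theorem coeff_rescale_hypergeometricSeries_mul_pow (a₁ a₂ b₁ b₂ c x : ℂ) (k : ℕ) :
    coeff k (rescale c (hypergeometricSeries {a₁, a₂} {b₁, b₂})) * x ^ k =
      poch a₂ k * poch a₁ k * (c * x) ^ k / (poch b₂ k * poch b₁ k * (k ! : ℂ)) := by
  simp only [coeff_rescale, coeff_hypergeometricSeries, poch, Multiset.insert_eq_cons,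
    Multiset.map_cons, Multiset.prod_cons, Multiset.map_singleton, Multiset.prod_singleton]
  ring

end Evaluation

/-- Example (a) of the paper:
`e^{-x} ₂F₂(a, d+1; 2a+1, d; 2x) = ₀F₁(-; a+1/2; x²/4) - ((1-2a/d)x/(2a+1)) ₀F₁(-; a+3/2; x²/4)`. -/
theorem example_exp
    (x a d : ℂ)
    (h2a1 : ∀ n : ℕ, 2 * a + 1 ≠ -(n : ℂ))
    (hd : ∀ n : ℕ, d ≠ -(n : ℂ))
    (ha1 : ∀ n : ℕ, a + 1 / 2 ≠ -(n : ℂ))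
    (ha3 : ∀ n : ℕ, a + 3 / 2 ≠ -(n : ℂ)) :
    Complex.exp (-x) *
        ∑' k : ℕ, poch a k * poch (d + 1) k * (2 * x) ^ k /
          (poch (2 * a + 1) k * poch d k * (Nat.factorial k : ℂ))
      = (∑' k : ℕ, (x ^ 2 / 4) ^ k / (poch (a + 1 / 2) k * (Nat.factorial k : ℂ)))
        - ((1 - 2 * a / d) * x / (2 * a + 1)) *
          ∑' k : ℕ, (x ^ 2 / 4) ^ k / (poch (a + 3 / 2) k * (Nat.factorial k : ℂ)) := by
  have bessel := (hasSumAt_modifiedBesselSeries ha1 x).sub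
    ((hasSumAt_C ((1 - 2 * a / d) / (2 * a + 1)) x).mul
      ((hasSumAt_X x).mul (hasSumAt_modifiedBesselSeries ha3 x)))
  have product := (hasSumAt_exp x).mul bessel
  rw [← rescale_hypergeometricSeries_eq_exp_mul h2a1 hd] at product
  have series_eq := product.tsum_eq
  simp only [coeff_rescale_hypergeometricSeries_mul_pow] at series_eq
  rw [series_eq, ← mul_assoc, ← Complex.exp_add, neg_add_cancel, Complex.exp_zero]
  ring
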